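/- Let μ be a Borel probability measure on Ω absolutely continuous with respect to d-dimensional Lebesgue measure, let ν be a Borel probability measure on Ω, let u0 be a Kantorovich potential and T0 an optimal transport map for W1(μ,ν). Then for μ-almost every x ∈ Ω, either x = T0(x), or u0 is differentiable at x and −∇u0(x) = (T0(x) − x)/|T0(x) − x|. In particular, if μ({x ∈ Ω : x ≠ T0(x)}) > 0, then the conditional μ-probability, given x ≠ T0(x), of the event that u0 is differentiable at x with −∇u0(x) = (T0(x) − x)/|T0(x) − x| equals 1. -/

import Mathlib

open MeasureTheory Set

noncomputable section

/-- The Wasserstein 1 distance between two Borel probability measures, defined as the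
infimum of the transport cost over all couplings. -/
def W1 {d : ℕ} (μ ν : Measure (EuclideanSpace ℝ (Fin d))) : ℝ :=
  sInf {c | ∃ γ : Measure (EuclideanSpace ℝ (Fin d) × EuclideanSpace ℝ (Fin d)),
    IsProbabilityMeasure γ ∧ γ.map Prod.fst = μ ∧ γ.map Prod.snd = ν ∧
    c = ∫ p, ‖p.1 - p.2‖ ∂γ}

/-- `u0` is a Kantorovich potential for `W1(μ, ν)`: it is 1-Lipschitz on Ω and achieves
the supremum in the dual problem. -/
def IsKantorovichPotential {d : ℕ} (Ω : Set (EuclideanSpace ℝ (Fin d)))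
    (μ ν : Measure (EuclideanSpace ℝ (Fin d))) (u0 : EuclideanSpace ℝ (Fin d) → ℝ) : Prop :=
  LipschitzOnWith 1 u0 Ω ∧
  ∀ u : EuclideanSpace ℝ (Fin d) → ℝ, LipschitzOnWith 1 u Ω →
    ∫ x, u x ∂μ - ∫ x, u x ∂ν ≤ ∫ x, u0 x ∂μ - ∫ x, u0 x ∂ν

/-- `T` is an optimal transport map for `W1(μ, ν)`: a Borel map from Ω to Ω pushing μ
forward to ν whose transport cost equals `W1 μ ν`. -/
def IsOptimalMap {d : ℕ} (Ω : Set (EuclideanSpace ℝ (Fin d)))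
    (μ ν : Measure (EuclideanSpace ℝ (Fin d)))
    (T : EuclideanSpace ℝ (Fin d) → EuclideanSpace ℝ (Fin d)) : Prop :=
  Measurable T ∧ MapsTo T Ω Ω ∧ μ.map T = ν ∧ ∫ x, ‖x - T x‖ ∂μ = W1 μ ν

/-!
Strong Kantorovich duality makes the potential and the map saturate each other:
`u0 x - u0 (T0 x) = ‖x - T0 x‖` for `μ`-almost every `x`. A `1`-Lipschitz function that drops at
unit speed between two points drops at unit speed along the whole segment, so wherever it is
differentiable its gradient, of norm at most one, has inner product `-1` with the unit vector of the
segment; the equality case of Cauchy–Schwarz makes it minus that vector. Extending `u0` to a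
`1`-Lipschitz function on the whole space, Rademacher's theorem gives differentiability almost
everywhere.

Duality itself is a Hahn–Banach argument. The least total mass of a majorant `φ ⊕ ψ` of `f` is
sublinear in `f`. A linear functional below it that touches it at minus the cost is positive, hence
integration against a measure by Riesz–Markov–Kakutani, and that measure is an optimal coupling.
-/

section FunctionalAnalysis

theorem exists_linearMap_apply_eq_of_sublinear {E : Type*} [AddCommGroup E] [Module ℝ E]
    (N : E → ℝ) (N_hom : ∀ c : ℝ, 0 < c → ∀ x, N (c • x) = c * N x)
    (N_add : ∀ x y, N (x + y) ≤ N x + N y) (v : E) :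
    ∃ L : E →ₗ[ℝ] ℝ, L v = N v ∧ ∀ x, L x ≤ N x := by
  have N_zero : N 0 = 0 := by
    have := N_hom 2 two_pos 0
    rw [smul_zero] at this
    linarith
  have le_on_line (t : ℝ) : t * N v ≤ N (t • v) := by
    rcases lt_trichotomy t 0 with ht | rfl | ht
    · have := N_add (t • v) (-t • v)
      rw [← add_smul, add_neg_cancel, zero_smul, N_zero, N_hom (-t) (neg_pos.2 ht)] at this
      linarith
    · simp [N_zero]
    · rw [N_hom t ht]
  have well_defined (c : ℝ) (hc : c • v = 0) : RingHom.id ℝ c • N v = 0 := by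
    rcases smul_eq_zero.1 hc with h | h <;> simp [h, N_zero]
  obtain ⟨L, L_extends, L_le⟩ := exists_extension_of_le_sublinear
    (LinearPMap.mkSpanSingleton' v (N v) well_defined) N N_hom N_add (by
      rintro ⟨x, hx⟩
      obtain ⟨c, rfl⟩ := Submodule.mem_span_singleton.1 hx
      rw [LinearPMap.mkSpanSingleton'_apply]
      exact le_on_line c)
  exact ⟨L, (L_extends ⟨v, Submodule.mem_span_singleton_self v⟩).trans
    (LinearPMap.mkSpanSingleton'_apply_self _ _ _ _), L_le⟩

theorem exists_isFiniteMeasure_integral_eq_of_nonneg {X : Type*} [TopologicalSpace X] [T2Space X]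
    [CompactSpace X] [MeasurableSpace X] [BorelSpace X] (L : C(X, ℝ) →ₗ[ℝ] ℝ)
    (L_nonneg : ∀ f : C(X, ℝ), 0 ≤ f → 0 ≤ L f) :
    ∃ γ : Measure X, IsFiniteMeasure γ ∧ ∀ f : C(X, ℝ), ∫ x, f x ∂γ = L f := by
  let Λ : CompactlySupportedContinuousMap X ℝ →ₚ[ℝ] ℝ := PositiveLinearMap.mk₀
    { toFun := fun f => L f.toContinuousMap
      map_add' := fun _ _ => L.map_add _ _
      map_smul' := fun _ _ => L.map_smul _ _ } (fun f hf => L_nonneg _ hf)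
  exact ⟨RealRMK.rieszMeasure Λ, ⟨isCompact_univ.measure_lt_top⟩, fun f =>
    RealRMK.integral_rieszMeasure Λ (CompactlySupportedContinuousMap.continuousMapEquiv f)⟩

end FunctionalAnalysis

section Measures

variable {X Z : Type*} [MeasurableSpace X] [MeasurableSpace Z]

theorem integrable_continuousMap [TopologicalSpace X] [CompactSpace X] [OpensMeasurableSpace X]
    (μ : Measure X) [IsFiniteMeasure μ] (f : C(X, ℝ)) : Integrable f μ :=
  f.continuous.integrable_of_hasCompactSupport (.of_compactSpace _)

-- Replacing `φ` by `-φ` turns the inequalities into equalities.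
theorem map_eq_of_forall_integral_comp_le [TopologicalSpace X] [HasOuterApproxClosed X]
    [BorelSpace X] {γ : Measure Z} {μ : Measure X} [IsFiniteMeasure γ] [IsFiniteMeasure μ]
    {π : Z → X} (hπ : Measurable π)
    (h : ∀ φ : BoundedContinuousFunction X ℝ, ∫ z, φ (π z) ∂γ ≤ ∫ x, φ x ∂μ) :
    γ.map π = μ := by
  refine ext_of_forall_integral_eq_of_IsFiniteMeasure fun φ => ?_
  rw [integral_map hπ.aemeasurable (by fun_prop)]
  refine le_antisymm (h φ) ?_
  simpa [integral_neg] using h (-φ)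

theorem map_comap_subtype_val_of_measure_compl_eq_zero {K : Set X} (hK : MeasurableSet K)
    {μ : Measure X} (hμ : μ Kᶜ = 0) : (μ.comap (Subtype.val : K → X)).map Subtype.val = μ := by
  rw [map_comap_subtype_coe hK, Measure.restrict_eq_self_of_ae_mem hμ]

theorem integrable_of_lipschitzOnWith [MetricSpace X] [ProperSpace X] [BorelSpace X]
    {μ : Measure X} [IsFiniteMeasure μ] {s : Set X} (hs : Bornology.IsBounded s) (hμ : μ sᶜ = 0)
    {C : NNReal} {u : X → ℝ} (hu : LipschitzOnWith C u s) : Integrable u μ := by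
  obtain ⟨v, hv, huv⟩ := hu.extend_real
  have mem_closure : ∀ᵐ x ∂μ, x ∈ closure s := by
    filter_upwards [mem_ae_iff.2 hμ] with x hx using subset_closure hx
  have v_integrable : Integrable v μ := by
    rw [← Measure.restrict_eq_self_of_ae_mem mem_closure]
    exact hv.continuous.continuousOn.integrableOn_compact hs.isCompact_closure
  refine v_integrable.congr ?_
  filter_upwards [mem_ae_iff.2 hμ] with x hx using (huv hx).symm

theorem measure_inter_div_self_eq_one {μ : Measure X} [IsFiniteMeasure μ] {s t : Set X}
    (hst : ∀ᵐ x ∂μ, x ∈ t → x ∈ s) (ht : 0 < μ t) : μ (s ∩ t) / μ t = 1 := by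
  rw [inter_comm, measure_inter_conull' (measure_mono_null (fun x hx => ?_) hst)]
  · exact ENNReal.div_self ht.ne' (measure_ne_top _ _)
  · exact fun h => hx.2 (h hx.1)

end Measures

/-- `γ` is a coupling of `μ` and `ν`, that is, a measure on the product with these marginals.
The total mass is not prescribed: it is inherited from `μ`. -/
structure IsCoupling {X Y : Type*} [MeasurableSpace X] [MeasurableSpace Y] (μ : Measure X)
    (ν : Measure Y) (γ : Measure (X × Y)) : Prop where
  map_fst : γ.map Prod.fst = μ
  map_snd : γ.map Prod.snd = ν

namespace IsCoupling

variable {X Y X' Y' : Type*} [MeasurableSpace X] [MeasurableSpace Y] [MeasurableSpace X']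
  [MeasurableSpace Y'] {μ : Measure X} {ν : Measure Y} {γ : Measure (X × Y)}

theorem prod (μ : Measure X) (ν : Measure Y) [IsProbabilityMeasure μ] [IsProbabilityMeasure ν] :
    IsCoupling μ ν (μ.prod ν) :=
  ⟨by simp, by simp⟩

theorem map (hγ : IsCoupling μ ν γ) {f : X → X'} {g : Y → Y'} (hf : Measurable f)
    (hg : Measurable g) : IsCoupling (μ.map f) (ν.map g) (γ.map (Prod.map f g)) where
  map_fst := by
    rw [Measure.map_map measurable_fst (hf.prodMap hg), ← hγ.map_fst,
      Measure.map_map hf measurable_fst]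
    rfl
  map_snd := by
    rw [Measure.map_map measurable_snd (hf.prodMap hg), ← hγ.map_snd,
      Measure.map_map hg measurable_snd]
    rfl

theorem isProbabilityMeasure [IsProbabilityMeasure μ] (hγ : IsCoupling μ ν γ) :
    IsProbabilityMeasure γ :=
  have : IsProbabilityMeasure (γ.map Prod.fst) := hγ.map_fst ▸ inferInstance
  Measure.isProbabilityMeasure_of_map Prod.fst

theorem integral_le_integral_add_integral (hγ : IsCoupling μ ν γ) {f : X × Y → ℝ} {φ : X → ℝ}
    {ψ : Y → ℝ} (hf : Integrable f γ) (hφ : Integrable φ μ) (hψ : Integrable ψ ν)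
    (h : ∀ x y, f (x, y) ≤ φ x + ψ y) : ∫ p, f p ∂γ ≤ ∫ x, φ x ∂μ + ∫ y, ψ y ∂ν := by
  obtain ⟨rfl, rfl⟩ := hγ
  rw [integral_map measurable_fst.aemeasurable hφ.aestronglyMeasurable,
    integral_map measurable_snd.aemeasurable hψ.aestronglyMeasurable]
  have hφ' := hφ.comp_measurable measurable_fst
  have hψ' := hψ.comp_measurable measurable_snd
  exact (integral_mono hf (hφ'.add hψ') fun p => h p.1 p.2).trans_eq (integral_add hφ' hψ')

end IsCoupling

section Duality

open scoped Pointwise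

variable {X Y : Type*} [TopologicalSpace X] [MeasurableSpace X] [TopologicalSpace Y]
  [MeasurableSpace Y]

/-- The total masses `∫ φ ∂μ + ∫ ψ ∂ν` of the continuous majorants `φ x + ψ y` of `f`. -/
def majorantMasses (μ : Measure X) (ν : Measure Y) (f : C(X × Y, ℝ)) : Set ℝ :=
  {r | ∃ (φ : C(X, ℝ)) (ψ : C(Y, ℝ)), (∀ x y, f (x, y) ≤ φ x + ψ y) ∧
    r = ∫ x, φ x ∂μ + ∫ y, ψ y ∂ν}

/-- The value of the Kantorovich dual problem for maximising `∫ f ∂γ` over couplings `γ`. Minimising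
a cost `c` is the case `f = -c`. -/
def dualValue (μ : Measure X) (ν : Measure Y) (f : C(X × Y, ℝ)) : ℝ :=
  sInf (majorantMasses μ ν f)

variable (μ : Measure X) (ν : Measure Y)

theorem majorantMasses_smul {c : ℝ} (hc : 0 < c) (f : C(X × Y, ℝ)) :
    majorantMasses μ ν (c • f) = c • majorantMasses μ ν f := by
  have smul_subset {c : ℝ} (hc : 0 < c) (f : C(X × Y, ℝ)) :
      c • majorantMasses μ ν f ⊆ majorantMasses μ ν (c • f) := by
    rintro _ ⟨_, ⟨φ, ψ, h, rfl⟩, rfl⟩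
    refine ⟨c • φ, c • ψ, fun x y => ?_, ?_⟩
    · simpa [mul_add] using mul_le_mul_of_nonneg_left (h x y) hc.le
    · simp [integral_const_mul, mul_add]
  refine (smul_subset hc f).antisymm' ?_
  rw [subset_smul_set_iff₀ hc.ne']
  simpa [smul_smul, inv_mul_cancel₀ hc.ne'] using smul_subset (inv_pos.2 hc) (c • f)

theorem dualValue_smul {c : ℝ} (hc : 0 < c) (f : C(X × Y, ℝ)) :
    dualValue μ ν (c • f) = c * dualValue μ ν f := by
  rw [dualValue, majorantMasses_smul μ ν hc, Real.sInf_smul_of_nonneg hc.le, smul_eq_mul, dualValue]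

variable [CompactSpace X] [CompactSpace Y]

theorem majorantMasses_nonempty (f : C(X × Y, ℝ)) : (majorantMasses μ ν f).Nonempty :=
  ⟨_, .const _ ‖f‖, 0, fun x y => by simpa using (le_abs_self _).trans (f.norm_coe_le_norm (x, y)),
    rfl⟩

section Sublinear

variable [SecondCountableTopologyEither X Y] [OpensMeasurableSpace X] [OpensMeasurableSpace Y]
  [IsProbabilityMeasure μ] [IsProbabilityMeasure ν]

theorem majorantMasses_bddBelow (f : C(X × Y, ℝ)) : BddBelow (majorantMasses μ ν f) := by
  refine ⟨∫ p, f p ∂μ.prod ν, ?_⟩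
  rintro _ ⟨φ, ψ, h, rfl⟩
  exact (IsCoupling.prod μ ν).integral_le_integral_add_integral (integrable_continuousMap _ f)
    (integrable_continuousMap μ φ) (integrable_continuousMap ν ψ) h

theorem dualValue_le {f : C(X × Y, ℝ)} {φ : C(X, ℝ)} {ψ : C(Y, ℝ)}
    (h : ∀ x y, f (x, y) ≤ φ x + ψ y) : dualValue μ ν f ≤ ∫ x, φ x ∂μ + ∫ y, ψ y ∂ν :=
  csInf_le (majorantMasses_bddBelow μ ν f) ⟨φ, ψ, h, rfl⟩

theorem dualValue_add_le (f g : C(X × Y, ℝ)) :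
    dualValue μ ν (f + g) ≤ dualValue μ ν f + dualValue μ ν g := by
  have nonempty := majorantMasses_nonempty μ ν
  have bddBelow := majorantMasses_bddBelow μ ν
  rw [dualValue, dualValue, dualValue,
    ← csInf_add (nonempty f) (bddBelow f) (nonempty g) (bddBelow g)]
  refine csInf_le_csInf (bddBelow (f + g)) ((nonempty f).add (nonempty g)) ?_
  rintro _ ⟨_, ⟨φ, ψ, hf, rfl⟩, _, ⟨φ', ψ', hg, rfl⟩, rfl⟩
  refine ⟨φ + φ', ψ + ψ', fun x y => ?_, ?_⟩
  · simpa [add_add_add_comm] using add_le_add (hf x y) (hg x y)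
  · simp only [ContinuousMap.add_apply]
    rw [integral_add (integrable_continuousMap μ φ) (integrable_continuousMap μ φ'),
      integral_add (integrable_continuousMap ν ψ) (integrable_continuousMap ν ψ'),
      add_add_add_comm]

end Sublinear

theorem exists_isCoupling_integral_eq_dualValue [T2Space X] [T2Space Y]
    [SecondCountableTopology X] [SecondCountableTopology Y] [BorelSpace X] [BorelSpace Y]
    [IsProbabilityMeasure μ] [IsProbabilityMeasure ν] (f : C(X × Y, ℝ)) :
    ∃ γ, IsCoupling μ ν γ ∧ ∫ p, f p ∂γ = dualValue μ ν f := by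
  obtain ⟨L, L_apply, L_le⟩ := exists_linearMap_apply_eq_of_sublinear (dualValue μ ν)
    (fun _ => dualValue_smul μ ν) (dualValue_add_le μ ν) f
  have L_nonneg (g : C(X × Y, ℝ)) (hg : 0 ≤ g) : 0 ≤ L g := by
    have dualValue_nonpos : dualValue μ ν (-g) ≤ 0 := by
      simpa using dualValue_le μ ν (f := -g) (φ := 0) (ψ := 0)
        fun x y => by simpa using hg (x, y)
    simpa using (L_le (-g)).trans dualValue_nonpos
  obtain ⟨γ, _, integral_eq⟩ := exists_isFiniteMeasure_integral_eq_of_nonneg L L_nonneg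
  refine ⟨γ, ⟨?_, ?_⟩, (integral_eq f).trans L_apply⟩
  · refine map_eq_of_forall_integral_comp_le measurable_fst fun φ => ?_
    let φ' : C(X × Y, ℝ) := φ.toContinuousMap.comp .fst
    calc ∫ p, φ p.1 ∂γ = L φ' := integral_eq φ'
      _ ≤ dualValue μ ν φ' := L_le φ'
      _ ≤ ∫ x, φ x ∂μ := by
        simpa using dualValue_le μ ν (f := φ') (φ := φ.toContinuousMap) (ψ := 0)
          fun x y => by simp [φ']
  · refine map_eq_of_forall_integral_comp_le measurable_snd fun ψ => ?_
    let ψ' : C(X × Y, ℝ) := ψ.toContinuousMap.comp .snd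
    calc ∫ p, ψ p.2 ∂γ = L ψ' := integral_eq ψ'
      _ ≤ dualValue μ ν ψ' := L_le ψ'
      _ ≤ ∫ y, ψ y ∂ν := by
        simpa using dualValue_le μ ν (f := ψ') (φ := 0) (ψ := ψ.toContinuousMap)
          fun x y => by simp [ψ']

end Duality

section LipschitzDuality

theorem exists_lipschitzWith_one_between {X : Type*} [PseudoMetricSpace X] {a b : X → ℝ}
    (h : ∀ x y, a x ≤ dist x y + b y) : ∃ u : X → ℝ, LipschitzWith 1 u ∧ a ≤ u ∧ u ≤ b := by
  have bddBelow (x : X) : BddBelow (range fun y => dist x y + b y) :=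
    ⟨a x, forall_mem_range.2 (h x)⟩
  refine ⟨fun x => ⨅ y, dist x y + b y, LipschitzWith.of_le_add fun x y => ?_, fun x => ?_,
    fun x => ?_⟩
  · have : Nonempty X := ⟨x⟩
    rw [← sub_le_iff_le_add]
    refine le_ciInf fun z => ?_
    linarith [ciInf_le (bddBelow x) z, dist_triangle x y z]
  · have : Nonempty X := ⟨x⟩
    exact le_ciInf (h x)
  · simpa using ciInf_le (bddBelow x) x

theorem exists_lipschitzWith_extension {X : Type*} [PseudoMetricSpace X] {K : Set X} {C : NNReal}
    {u : K → ℝ} (hu : LipschitzWith C u) :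
    ∃ v : X → ℝ, LipschitzWith C v ∧ ∀ x : K, v x = u x := by
  have extend_apply (x : K) : Function.extend Subtype.val u 0 x.1 = u x :=
    Subtype.val_injective.extend_apply u 0 x
  have extend_lipschitz : LipschitzOnWith C (Function.extend Subtype.val u 0) K := by
    intro x hx y hy
    rw [extend_apply ⟨x, hx⟩, extend_apply ⟨y, hy⟩]
    exact hu ⟨x, hx⟩ ⟨y, hy⟩
  obtain ⟨v, hv, extend_eq⟩ := extend_lipschitz.extend_real
  exact ⟨v, hv, fun x => (extend_eq x.2).symm.trans (extend_apply x)⟩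

variable {X : Type*} [MetricSpace X] [MeasurableSpace X] [BorelSpace X]

theorem exists_isCoupling_integral_dist_le [CompactSpace X] (μ ν : Measure X)
    [IsProbabilityMeasure μ] [IsProbabilityMeasure ν] {r : ℝ}
    (h : ∀ u : X → ℝ, LipschitzWith 1 u → ∫ x, u x ∂μ - ∫ x, u x ∂ν ≤ r) :
    ∃ γ, IsCoupling μ ν γ ∧ ∫ p, dist p.1 p.2 ∂γ ≤ r := by
  let cost : C(X × X, ℝ) := ⟨fun p => dist p.1 p.2, continuous_dist⟩
  obtain ⟨γ, hγ, integral_eq⟩ := exists_isCoupling_integral_eq_dualValue μ ν (-cost)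
  refine ⟨γ, hγ, ?_⟩
  have cost_eq : ∫ p, dist p.1 p.2 ∂γ = -dualValue μ ν (-cost) := by
    rw [← integral_eq, ← integral_neg]
    simp [cost]
  rw [cost_eq, neg_le]
  refine le_csInf (majorantMasses_nonempty μ ν _) ?_
  rintro _ ⟨φ, ψ, hφψ, rfl⟩
  obtain ⟨u, hu, neg_φ_le, le_ψ⟩ := exists_lipschitzWith_one_between (a := -φ) (b := ψ)
    fun x y => by
      have : -dist x y ≤ φ x + ψ y := hφψ x y
      rw [ContinuousMap.neg_apply]
      linarith
  have u_integrable (m : Measure X) [IsFiniteMeasure m] : Integrable u m :=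
    integrable_continuousMap m ⟨u, hu.continuous⟩
  have integral_neg_φ_le : -∫ x, φ x ∂μ ≤ ∫ x, u x ∂μ := by
    rw [← integral_neg]
    exact integral_mono (integrable_continuousMap μ φ).neg (u_integrable μ) neg_φ_le
  have integral_le_ψ : ∫ x, u x ∂ν ≤ ∫ x, ψ x ∂ν :=
    integral_mono (u_integrable ν) (integrable_continuousMap ν ψ) le_ψ
  linarith [h u hu]

theorem exists_isCoupling_integral_dist_le_of_isCompact {K : Set X} (hK : IsCompact K)
    {μ ν : Measure X} [IsProbabilityMeasure μ] [IsProbabilityMeasure ν]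
    (hμ : μ Kᶜ = 0) (hν : ν Kᶜ = 0) {r : ℝ}
    (h : ∀ u : X → ℝ, LipschitzWith 1 u → ∫ x, u x ∂μ - ∫ x, u x ∂ν ≤ r) :
    ∃ γ, IsCoupling μ ν γ ∧ ∫ p, dist p.1 p.2 ∂γ ≤ r := by
  have : CompactSpace K := isCompact_iff_compactSpace.1 hK
  have val_embedding : MeasurableEmbedding (Subtype.val : K → X) :=
    .subtype_coe hK.measurableSet
  have map_comap {m : Measure X} := map_comap_subtype_val_of_measure_compl_eq_zero (μ := m)
    hK.measurableSet
  have isProbability_comap {m : Measure X} [IsProbabilityMeasure m] (hm : m Kᶜ = 0) :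
      IsProbabilityMeasure (m.comap (Subtype.val : K → X)) :=
    val_embedding.isProbabilityMeasure_comap (by rwa [Subtype.range_coe])
  have := isProbability_comap hμ
  have := isProbability_comap hν
  obtain ⟨γ, hγ, cost_le⟩ := exists_isCoupling_integral_dist_le
    (μ.comap (Subtype.val : K → X)) (ν.comap Subtype.val) (r := r) fun u hu => by
      obtain ⟨v, hv, v_eq⟩ := exists_lipschitzWith_extension hu
      have := h v hv
      rw [← map_comap hμ, ← map_comap hν] at this
      simpa only [val_embedding.integral_map, v_eq] using this
  refine ⟨γ.map (Prod.map Subtype.val Subtype.val), ?_, ?_⟩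
  · simpa only [map_comap hμ, map_comap hν] using
      hγ.map measurable_subtype_coe measurable_subtype_coe
  · rwa [(val_embedding.prodMap val_embedding).integral_map]

end LipschitzDuality

section Saturation

variable {X : Type*} [PseudoMetricSpace X] [MeasurableSpace X]

theorem ae_sub_eq_dist_of_integral_dist_le {μ : Measure X} {T : X → X} {u : X → ℝ}
    (hT : AEMeasurable T μ) (hu : Integrable u μ) (huT : Integrable u (μ.map T))
    (hdist : Integrable (fun x => dist x (T x)) μ) (sub_le : ∀ᵐ x ∂μ, u x - u (T x) ≤ dist x (T x))
    (h : ∫ x, dist x (T x) ∂μ ≤ ∫ x, u x ∂μ - ∫ x, u x ∂μ.map T) :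
    ∀ᵐ x ∂μ, u x - u (T x) = dist x (T x) := by
  have huT' : Integrable (fun x => u (T x)) μ := huT.comp_aemeasurable hT
  refine (integral_eq_iff_of_ae_le (hu.sub huT') hdist sub_le).1 ?_
  refine (integral_mono_ae (hu.sub huT') hdist sub_le).antisymm ?_
  rwa [integral_map hT huT.aestronglyMeasurable, ← integral_sub hu huT'] at h

end Saturation

section Gradient

variable {E : Type*} [NormedAddCommGroup E]

theorem lipschitzWith_one_eq_on_segment [NormedSpace ℝ E] {u : E → ℝ} (hu : LipschitzWith 1 u)
    {x y : E} (hxy : u x - u y = ‖x - y‖) {t : ℝ} (ht : t ∈ Icc (0 : ℝ) 1) :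
    u (x + t • (y - x)) = u x - t * ‖y - x‖ := by
  set z := x + t • (y - x) with hz
  have dist_xz : dist x z = t * ‖y - x‖ := by
    rw [hz, dist_self_add_right, norm_smul, Real.norm_of_nonneg ht.1]
  have dist_zy : dist z y = (1 - t) * ‖y - x‖ := by
    rw [dist_comm, dist_eq_norm, show y - z = (1 - t) • (y - x) by rw [hz]; module, norm_smul,
      Real.norm_of_nonneg (sub_nonneg.2 ht.2)]
  have drop_xz := (le_abs_self _).trans (hu.dist_le_mul x z)
  have drop_zy := (le_abs_self _).trans (hu.dist_le_mul z y)
  rw [norm_sub_rev] at hxy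
  rw [dist_xz, NNReal.coe_one] at drop_xz
  rw [dist_zy, NNReal.coe_one] at drop_zy
  linarith

variable [InnerProductSpace ℝ E]

theorem eq_of_norm_le_one_of_inner_eq_one {g e : E} (hg : ‖g‖ ≤ 1) (he : ‖e‖ = 1)
    (hge : inner ℝ g e = 1) : g = e := by
  have one_le : 1 ≤ ‖g‖ := by simpa [hge, he] using real_inner_le_norm g e
  exact (inner_eq_one_iff_of_norm_eq_one (hg.antisymm one_le) he).1 hge

variable [CompleteSpace E]

theorem neg_gradient_eq_of_sub_eq_norm {u : E → ℝ} (hu : LipschitzWith 1 u) {x y g : E}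
    (hg : HasGradientAt u g x) (hne : x ≠ y) (hxy : u x - u y = ‖x - y‖) :
    -g = ‖y - x‖⁻¹ • (y - x) := by
  have norm_pos : 0 < ‖y - x‖ := norm_pos_iff.2 (sub_ne_zero.2 hne.symm)
  have norm_le : ‖g‖ ≤ 1 := by simpa using hg.hasFDerivAt.le_of_lipschitz hu
  have deriv_on_segment : HasDerivWithinAt (fun t : ℝ => u (x + t • (y - x))) (-‖y - x‖)
      (Icc 0 1) 0 := by
    have affine : HasDerivAt (fun t : ℝ => u x - t * ‖y - x‖) (-‖y - x‖) 0 := by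
      simpa using ((hasDerivAt_id (0 : ℝ)).mul_const ‖y - x‖).const_sub (u x)
    exact affine.hasDerivWithinAt.congr_of_mem
      (fun t ht => lipschitzWith_one_eq_on_segment hu hxy ht) (left_mem_Icc.2 zero_le_one)
  have inner_eq : inner ℝ g (y - x) = -‖y - x‖ :=
    (uniqueDiffOn_Icc_zero_one 0 (left_mem_Icc.2 zero_le_one)).eq_deriv _
      (hg.hasFDerivAt.hasLineDerivAt (y - x)).hasDerivWithinAt deriv_on_segment
  refine eq_of_norm_le_one_of_inner_eq_one (by rwa [norm_neg]) ?_ ?_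
  · rw [norm_smul, norm_inv, norm_norm, inv_mul_cancel₀ norm_pos.ne']
  · rw [inner_neg_left, inner_smul_right, inner_eq, mul_neg, neg_neg,
      inv_mul_cancel₀ norm_pos.ne']

end Gradient

section Potentials

variable {d : ℕ} {Ω : Set (EuclideanSpace ℝ (Fin d))} {μ ν : Measure (EuclideanSpace ℝ (Fin d))}

theorem W1_le_integral_of_isCoupling [IsProbabilityMeasure μ]
    {γ : Measure (EuclideanSpace ℝ (Fin d) × EuclideanSpace ℝ (Fin d))} (hγ : IsCoupling μ ν γ) :
    W1 μ ν ≤ ∫ p, ‖p.1 - p.2‖ ∂γ := by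
  refine csInf_le ⟨0, ?_⟩ ⟨γ, hγ.isProbabilityMeasure, hγ.map_fst, hγ.map_snd, rfl⟩
  rintro _ ⟨_, _, _, _, rfl⟩
  exact integral_nonneg fun _ => norm_nonneg _

variable [IsProbabilityMeasure μ] [IsProbabilityMeasure ν]

theorem IsKantorovichPotential.W1_le (hΩ : Bornology.IsBounded Ω) (hμ : μ Ωᶜ = 0)
    (hν : ν Ωᶜ = 0) {u : EuclideanSpace ℝ (Fin d) → ℝ} (hu : IsKantorovichPotential Ω μ ν u) :
    W1 μ ν ≤ ∫ x, u x ∂μ - ∫ x, u x ∂ν := by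
  have compl_closure : (closure Ω)ᶜ ⊆ Ωᶜ := compl_subset_compl.2 subset_closure
  obtain ⟨γ, hγ, cost_le⟩ := exists_isCoupling_integral_dist_le_of_isCompact hΩ.isCompact_closure
    (measure_mono_null compl_closure hμ) (measure_mono_null compl_closure hν)
    fun v hv => hu.2 v hv.lipschitzOnWith
  simp only [dist_eq_norm] at cost_le
  exact (W1_le_integral_of_isCoupling hγ).trans cost_le

theorem IsOptimalMap.ae_sub_eq_dist (hΩ : Bornology.IsBounded Ω) (hμ : μ Ωᶜ = 0)
    (hν : ν Ωᶜ = 0) {u : EuclideanSpace ℝ (Fin d) → ℝ} (hu : IsKantorovichPotential Ω μ ν u)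
    {T : EuclideanSpace ℝ (Fin d) → EuclideanSpace ℝ (Fin d)} (hT : IsOptimalMap Ω μ ν T) :
    ∀ᵐ x ∂μ, u x - u (T x) = dist x (T x) := by
  have cost_le := hu.W1_le hΩ hμ hν
  obtain ⟨T_measurable, T_mapsTo, rfl, cost_eq⟩ := hT
  have mem_Ω : ∀ᵐ x ∂μ, x ∈ Ω := hμ
  refine ae_sub_eq_dist_of_integral_dist_le T_measurable.aemeasurable
    (integrable_of_lipschitzOnWith hΩ hμ hu.1) (integrable_of_lipschitzOnWith hΩ hν hu.1) ?_ ?_ ?_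
  · refine .of_bound (measurable_id.dist T_measurable).aestronglyMeasurable (Metric.diam Ω) ?_
    filter_upwards [mem_Ω] with x hx
    rw [Real.norm_of_nonneg dist_nonneg]
    exact Metric.dist_le_diam_of_mem hΩ hx (T_mapsTo hx)
  · filter_upwards [mem_Ω] with x hx
    simpa using (le_abs_self _).trans (hu.1.dist_le_mul x hx (T x) (T_mapsTo hx))
  · simpa only [dist_eq_norm, cost_eq] using cost_le

end Potentials

theorem stmt5_general {d : ℕ} (Ω : Set (EuclideanSpace ℝ (Fin d))) (hΩ : Bornology.IsBounded Ω)
    (μ ν : Measure (EuclideanSpace ℝ (Fin d)))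
    [IsProbabilityMeasure μ] [IsProbabilityMeasure ν]
    (hμΩ : μ Ωᶜ = 0) (hνΩ : ν Ωᶜ = 0) (hac : μ ≪ volume)
    (u0 : EuclideanSpace ℝ (Fin d) → ℝ) (hu0 : IsKantorovichPotential Ω μ ν u0)
    (T0 : EuclideanSpace ℝ (Fin d) → EuclideanSpace ℝ (Fin d))
    (hT0 : IsOptimalMap Ω μ ν T0) :
    (∀ᵐ x ∂μ, x = T0 x ∨
      ∃ g : EuclideanSpace ℝ (Fin d), HasGradientWithinAt u0 g Ω x ∧
        -g = ‖T0 x - x‖⁻¹ • (T0 x - x)) ∧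
    (0 < μ {x | x ∈ Ω ∧ x ≠ T0 x} →
      μ ({x | ∃ g : EuclideanSpace ℝ (Fin d), HasGradientWithinAt u0 g Ω x ∧
            -g = ‖T0 x - x‖⁻¹ • (T0 x - x)} ∩ {x | x ∈ Ω ∧ x ≠ T0 x}) /
        μ {x | x ∈ Ω ∧ x ≠ T0 x} = 1) := by
  obtain ⟨v, hv, u0_eq_v⟩ := hu0.1.extend_real
  have gradient_eq : ∀ᵐ x ∂μ, x = T0 x ∨
      ∃ g : EuclideanSpace ℝ (Fin d), HasGradientWithinAt u0 g Ω x ∧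
        -g = ‖T0 x - x‖⁻¹ • (T0 x - x) := by
    filter_upwards [mem_ae_iff.2 hμΩ, hac.ae_le hv.ae_differentiableAt,
      hT0.ae_sub_eq_dist hΩ hμΩ hνΩ hu0] with x hx v_diff saturated
    refine or_iff_not_imp_left.2 fun hne => ⟨gradient v x, ?_, ?_⟩
    · exact v_diff.hasGradientAt.hasFDerivAt.hasFDerivWithinAt.congr u0_eq_v (u0_eq_v hx)
    · rw [u0_eq_v hx, u0_eq_v (hT0.2.1 hx), dist_eq_norm] at saturated
      exact neg_gradient_eq_of_sub_eq_norm hv v_diff.hasGradientAt hne saturated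
  refine ⟨gradient_eq, measure_inter_div_self_eq_one ?_⟩
  filter_upwards [gradient_eq] with x hx hmem using hx.resolve_left hmem.2

theorem stmt5 {d : ℕ} (hd : 1 ≤ d) (Ω : Set (EuclideanSpace ℝ (Fin d)))
    (hΩc : IsCompact Ω) (hΩv : Convex ℝ Ω)
    (μ ν : Measure (EuclideanSpace ℝ (Fin d)))
    [IsProbabilityMeasure μ] [IsProbabilityMeasure ν]
    (hμΩ : μ Ωᶜ = 0) (hνΩ : ν Ωᶜ = 0) (hac : μ ≪ volume)
    (u0 : EuclideanSpace ℝ (Fin d) → ℝ) (hu0 : IsKantorovichPotential Ω μ ν u0)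
    (T0 : EuclideanSpace ℝ (Fin d) → EuclideanSpace ℝ (Fin d))
    (hT0 : IsOptimalMap Ω μ ν T0) :
    (∀ᵐ x ∂μ, x = T0 x ∨
      ∃ g : EuclideanSpace ℝ (Fin d), HasGradientWithinAt u0 g Ω x ∧
        -g = ‖T0 x - x‖⁻¹ • (T0 x - x)) ∧
    (0 < μ {x | x ∈ Ω ∧ x ≠ T0 x} →
      μ ({x | ∃ g : EuclideanSpace ℝ (Fin d), HasGradientWithinAt u0 g Ω x ∧
            -g = ‖T0 x - x‖⁻¹ • (T0 x - x)} ∩ {x | x ∈ Ω ∧ x ≠ T0 x}) /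
        μ {x | x ∈ Ω ∧ x ≠ T0 x} = 1) := by
  exact stmt5_general Ω hΩc.isBounded μ ν hμΩ hνΩ hac u0 hu0 T0 hT0
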